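/- For the uniform probability distribution P on the boundary L of the regular hexagon with vertices (0,0), (1,0), (3/2,√3/2), (1,√3), (0,√3), (−1/2,√3/2), the set {(37/32, 9√3/32), (1/2, 15√3/16), (−5/32, 9√3/32)} forms an optimal set of three-means, and the quantization error for three-means is V₃(P) = 199/768. -/

import Mathlib

open MeasureTheory Real Filter
open scoped ENNReal

noncomputable section

/-- The plane `ℝ²` with the Euclidean norm. -/
abbrev E2 : Type := EuclideanSpace ℝ (Fin 2)

/-- The point `(a, b)` of `ℝ²`. -/
def pt (a b : ℝ) : E2 := !₂[a, b]

/-- The `n`th quantization error of a Borel probability measure `P` on `ℝ²`: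
the infimum of `∫ min_{a ∈ α} ‖x - a‖² dP(x)` over all (nonempty) finite sets
`α ⊆ ℝ²` with at most `n` elements. -/
def quantErr (P : Measure E2) (n : ℕ) : ℝ :=
  sInf {v : ℝ | ∃ α : Set E2, α.Finite ∧ α.Nonempty ∧ α.ncard ≤ n ∧
    v = ∫ x, sInf ((fun a => ‖x - a‖ ^ 2) '' α) ∂P}

/-- `α` is an optimal set of `n`-means for `P` if it attains the `n`th
quantization error. -/
def IsOptimalSet (P : Measure E2) (n : ℕ) (α : Set E2) : Prop :=
  α.Finite ∧ α.Nonempty ∧ α.ncard ≤ n ∧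
    (∫ x, sInf ((fun a => ‖x - a‖ ^ 2) '' α) ∂P) = quantErr P n

/-- The boundary `L` of the regular hexagon with vertices `O(0,0)`, `A₁(1,0)`,
`A₂(3/2,√3/2)`, `A₃(1,√3)`, `A₄(0,√3)`, `A₅(-1/2,√3/2)`. -/
def hexL : Set E2 :=
  segment ℝ (pt 0 0) (pt 1 0) ∪ segment ℝ (pt 1 0) (pt (3/2) (Real.sqrt 3/2)) ∪
  segment ℝ (pt (3/2) (Real.sqrt 3/2)) (pt 1 (Real.sqrt 3)) ∪
  segment ℝ (pt 1 (Real.sqrt 3)) (pt 0 (Real.sqrt 3)) ∪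
  segment ℝ (pt 0 (Real.sqrt 3)) (pt (-(1/2)) (Real.sqrt 3/2)) ∪
  segment ℝ (pt (-(1/2)) (Real.sqrt 3/2)) (pt 0 0)

/-- The uniform probability distribution on `hexL`: density `1/6` with respect
to the one-dimensional Hausdorff (arc-length) measure on `hexL`. -/
def hexP : Measure E2 := (6 : ℝ≥0∞)⁻¹ • (μH[1] : Measure E2).restrict hexL

/-!
Let `m` be the centre of the hexagon. Whatever the finite set `α`, the squared distance from `x` to
`α` is at least `‖x - m‖ ^ 2 - 21/256` minus the sum over `a ∈ α` of the positive parts of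
`‖x - m‖ ^ 2 - ‖x - a‖ ^ 2 - 21/256`. Integrating this decouples the points of `α`, so a lower bound
on the distortion follows from maximizing the integrated positive part over a single point `a`.

The expression `‖x - m‖ ^ 2 - ‖x - a‖ ^ 2 - 21/256` is affine in `x`, so it is positive on an arc of
the hexagon around one vertex, around one edge or around two edges. On an arc with fixed ends its
integral is a concave quadratic in `a`, and maximizing that leaves a polynomial inequality in the
two end parameters. The maximum is attained by an edge extended by half an edge on both sides. At
the constant `21/256` each of the three claimed means reaches this maximum, on its own Voronoi
cell, so the lower bound equals their distortion.
-/

open Metric AffineMap Set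

section NetGain

variable {E : Type*} [NormedAddCommGroup E]

/-- The saving, net of a fixed `price`, from serving `x` from `v` instead of from the base point
`m`. Its positive part is the contribution of the single point `v` to the dual bound for the
`n`-means problem. -/
def netGain (m : E) (price : ℝ) (v x : E) : ℝ := ‖x - m‖ ^ 2 - ‖x - v‖ ^ 2 - price

lemma sInf_norm_sub_sq_image_eq_infDist_sq {α : Set E} (hα : IsCompact α) (hne : α.Nonempty)
    (x : E) :
    sInf ((fun a ↦ ‖x - a‖ ^ 2) '' α) = infDist x α ^ 2 := by
  obtain ⟨a, ha, hdist⟩ := hα.exists_infDist_eq_dist hne x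
  refine IsLeast.csInf_eq ⟨⟨a, ha, by rw [hdist, dist_eq_norm]⟩, ?_⟩
  rintro _ ⟨b, hb, rfl⟩
  simp only [← dist_eq_norm]
  exact pow_le_pow_left₀ infDist_nonneg (infDist_le_dist_of_mem hb) 2

lemma continuous_netGain (m : E) (price : ℝ) (v : E) : Continuous (netGain m price v) := by
  unfold netGain
  fun_prop

lemma norm_sub_sq_sub_sum_netGain_le_infDist_sq (m : E) (price : ℝ) {α : Finset E}
    (hα : α.Nonempty) (x : E) :
    ‖x - m‖ ^ 2 - price - ∑ a ∈ α, max (netGain m price a x) 0 ≤ infDist x α ^ 2 := by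
  obtain ⟨a, ha, hdist⟩ := α.finite_toSet.isCompact.exists_infDist_eq_dist (by simpa using hα) x
  have hgain : ‖x - m‖ ^ 2 - ‖x - a‖ ^ 2 - price ≤ ∑ b ∈ α, max (netGain m price b x) 0 :=
    (le_max_left _ _).trans <| Finset.single_le_sum
      (f := fun b ↦ max (netGain m price b x) 0) (fun _ _ ↦ le_max_right _ _) ha
  rw [hdist, dist_eq_norm]
  linarith

variable [MeasurableSpace E] {P : Measure E}

lemma integrable_norm_sub_sq [IsFiniteMeasure P] (hP : MemLp id 2 P) (v : E) :
    Integrable (fun x ↦ ‖x - v‖ ^ 2) P :=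
  (hP.sub (memLp_const v)).integrable_norm_pow two_ne_zero

lemma integrable_infDist_sq [IsFiniteMeasure P] (hP : MemLp id 2 P) {α : Set E}
    (hα : α.Nonempty) : Integrable (fun x ↦ infDist x α ^ 2) P := by
  obtain ⟨a, ha⟩ := hα
  refine (integrable_norm_sub_sq hP a).mono
    (((continuous_infDist_pt α).pow 2).comp_aestronglyMeasurable hP.1) (.of_forall fun x ↦ ?_)
  rw [norm_of_nonneg (by positivity), norm_of_nonneg (by positivity), ← dist_eq_norm]
  exact pow_le_pow_left₀ infDist_nonneg (infDist_le_dist_of_mem ha) 2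

theorem integral_norm_sub_sq_sub_le_integral_infDist_sq [IsProbabilityMeasure P]
    (hP : MemLp id 2 P) (m : E) (price : ℝ) {K : ℝ}
    (hK : ∀ v, ∫ x, max (netGain m price v x) 0 ∂P ≤ K)
    {n : ℕ} {α : Finset E} (hα : α.Nonempty) (hn : α.card ≤ n) :
    ∫ x, ‖x - m‖ ^ 2 ∂P - price - n * K ≤ ∫ x, infDist x α ^ 2 ∂P := by
  have hK₀ : 0 ≤ K := (integral_nonneg fun _ ↦ le_max_right _ _).trans (hK m)
  have hbase : Integrable (fun x ↦ ‖x - m‖ ^ 2 - price) P :=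
    (integrable_norm_sub_sq hP m).sub (integrable_const price)
  have hgain (v : E) : Integrable (fun x ↦ max (netGain m price v x) 0) P :=
    (((integrable_norm_sub_sq hP m).sub (integrable_norm_sub_sq hP v)).sub
      (integrable_const price)).pos_part
  calc ∫ x, ‖x - m‖ ^ 2 ∂P - price - n * K
      ≤ ∫ x, ‖x - m‖ ^ 2 ∂P - price - ∑ a ∈ α, ∫ x, max (netGain m price a x) 0 ∂P := by
        gcongr
        calc ∑ a ∈ α, ∫ x, max (netGain m price a x) 0 ∂P ≤ α.card • K :=
              Finset.sum_le_card_nsmul _ _ _ fun a _ ↦ hK a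
          _ ≤ n * K := by rw [nsmul_eq_mul]; gcongr
    _ = ∫ x, (‖x - m‖ ^ 2 - price - ∑ a ∈ α, max (netGain m price a x) 0) ∂P := by
        rw [integral_sub hbase (integrable_finsetSum α fun a _ ↦ hgain a),
          integral_sub (integrable_norm_sub_sq hP m) (integrable_const price),
          integral_finsetSum α fun a _ ↦ hgain a, integral_const, probReal_univ, one_smul]
    _ ≤ ∫ x, infDist x α ^ 2 ∂P :=
        integral_mono (hbase.sub (integrable_finsetSum α fun a _ ↦ hgain a))
          (integrable_infDist_sq hP (by simpa using hα))
          (norm_sub_sq_sub_sum_netGain_le_infDist_sq m price hα)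

end NetGain

section InnerProductSpace

variable {E : Type*} [NormedAddCommGroup E] [InnerProductSpace ℝ E]

lemma norm_lineMap_sub_sq (x y v : E) (t : ℝ) :
    ‖lineMap x y t - v‖ ^ 2 =
      lineMap (‖x - v‖ ^ 2) (‖y - v‖ ^ 2) t - t * (1 - t) * ‖x - y‖ ^ 2 := by
  have hline : lineMap x y t - v = (1 - t) • (x - v) + t • (y - v) := by
    rw [lineMap_apply_module]
    module
  rw [hline, ← sub_sub_sub_cancel_right x y v, norm_add_sq_real, norm_sub_sq_real (x - v),
    norm_smul, norm_smul, mul_pow, mul_pow, Real.norm_eq_abs, Real.norm_eq_abs, sq_abs, sq_abs,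
    inner_smul_left, inner_smul_right, conj_trivial, lineMap_apply_ring]
  ring

lemma netGain_lineMap (m : E) (price : ℝ) (v x y : E) (t : ℝ) :
    netGain m price v (lineMap x y t) =
      lineMap (netGain m price v x) (netGain m price v y) t := by
  simp only [netGain, norm_lineMap_sub_sq, lineMap_apply_ring]
  ring

lemma integral_lineMap (a b s : ℝ) :
    ∫ t in (0 : ℝ)..s, lineMap a b t = s * a + s ^ 2 * (b - a) / 2 := by
  simp only [lineMap_apply_ring']
  rw [intervalIntegral.integral_add (by simp) (by simp), intervalIntegral.integral_mul_const,
    integral_id, intervalIntegral.integral_const, smul_eq_mul]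
  ring

lemma integral_norm_lineMap_sub_sq (x y v : E) (s : ℝ) :
    ∫ t in (0 : ℝ)..s, ‖lineMap x y t - v‖ ^ 2 =
      s * ‖x - v‖ ^ 2 + s ^ 2 * (‖y - v‖ ^ 2 - ‖x - v‖ ^ 2) / 2 -
        (s ^ 2 / 2 - s ^ 3 / 3) * ‖x - y‖ ^ 2 := by
  have hparabola : ∫ t in (0 : ℝ)..s, t * (1 - t) = s ^ 2 / 2 - s ^ 3 / 3 := by
    simp only [mul_sub, mul_one, ← sq]
    rw [intervalIntegral.integral_sub (by simp) (by simp), integral_id, integral_pow]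
    norm_num
  simp only [norm_lineMap_sub_sq]
  rw [intervalIntegral.integral_sub (Continuous.intervalIntegrable (by fun_prop) _ _)
    (Continuous.intervalIntegrable (by fun_prop) _ _), integral_lineMap,
    intervalIntegral.integral_mul_const, hparabola]

lemma integral_infDist_lineMap_sq_le (x y : E) {α : Set E} {a b : E} (ha : a ∈ α) (hb : b ∈ α) :
    ∫ t in (0 : ℝ)..1, infDist (lineMap x y t) α ^ 2 ≤
      (3 * ‖x - a‖ ^ 2 + ‖y - a‖ ^ 2 + ‖x - b‖ ^ 2 + 3 * ‖y - b‖ ^ 2) / 8 -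
        ‖x - y‖ ^ 2 / 6 := by
  have hdist {c : E} (hc : c ∈ α) (t : ℝ) :
      infDist (lineMap x y t) α ^ 2 ≤ ‖lineMap x y t - c‖ ^ 2 := by
    rw [← dist_eq_norm]
    exact pow_le_pow_left₀ infDist_nonneg (infDist_le_dist_of_mem hc) 2
  have hint (r s : ℝ) :
      IntervalIntegrable (fun t : ℝ ↦ infDist (lineMap x y t) α ^ 2) volume r s :=
    (((continuous_infDist_pt α).comp lineMap_continuous).pow 2).intervalIntegrable r s
  have hnorm (c : E) (r s : ℝ) :
      IntervalIntegrable (fun t : ℝ ↦ ‖lineMap x y t - c‖ ^ 2) volume r s :=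
    Continuous.intervalIntegrable (by fun_prop) r s
  calc ∫ t in (0 : ℝ)..1, infDist (lineMap x y t) α ^ 2
      = (∫ t in (0 : ℝ)..1 / 2, infDist (lineMap x y t) α ^ 2) +
          ∫ t in (1 / 2 : ℝ)..1, infDist (lineMap x y t) α ^ 2 :=
        (intervalIntegral.integral_add_adjacent_intervals (hint _ _) (hint _ _)).symm
    _ ≤ (∫ t in (0 : ℝ)..1 / 2, ‖lineMap x y t - a‖ ^ 2) +
          ∫ t in (1 / 2 : ℝ)..1, ‖lineMap x y t - b‖ ^ 2 := by
        gcongr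
        · exact intervalIntegral.integral_mono (by norm_num) (hint _ _) (hnorm _ _ _) (hdist ha)
        · exact intervalIntegral.integral_mono (by norm_num) (hint _ _) (hnorm _ _ _) (hdist hb)
    _ = _ := by
        rw [← intervalIntegral.integral_interval_sub_left (hnorm b 0 1) (hnorm b 0 (1 / 2))]
        simp only [integral_norm_lineMap_sub_sq]
        ring

end InnerProductSpace

section Quantization

variable {P : Measure E2} {n : ℕ} {α : Set E2}

lemma isOptimalSet_and_quantErr_eq {V : ℝ} (hfin : α.Finite) (hne : α.Nonempty)
    (hcard : α.ncard ≤ n) (hle : ∫ x, infDist x α ^ 2 ∂P ≤ V)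
    (hge : ∀ β : Finset E2, β.Nonempty → β.card ≤ n → V ≤ ∫ x, infDist x β ^ 2 ∂P) :
    IsOptimalSet P n α ∧ quantErr P n = V := by
  have hmin (β : Set E2) (hβ : β.Finite) (hβne : β.Nonempty) (hβn : β.ncard ≤ n) :
      V ≤ ∫ x, sInf ((fun a ↦ ‖x - a‖ ^ 2) '' β) ∂P := by
    simp only [sInf_norm_sub_sq_image_eq_infDist_sq hβ.isCompact hβne]
    lift β to Finset E2 using hβ
    exact hge β (by simpa using hβne) (by simpa using hβn)
  have hV : ∫ x, sInf ((fun a ↦ ‖x - a‖ ^ 2) '' α) ∂P = V := by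
    refine le_antisymm ?_ (hmin α hfin hne hcard)
    simpa only [sInf_norm_sub_sq_image_eq_infDist_sq hfin.isCompact hne] using hle
  have hquant : quantErr P n = V := by
    refine IsLeast.csInf_eq ⟨⟨α, hfin, hne, hcard, hV.symm⟩, ?_⟩
    rintro _ ⟨β, hβ, hβne, hβn, rfl⟩
    exact hmin β hβ hβne hβn
  exact ⟨⟨hfin, hne, hcard, hV.trans hquant.symm⟩, hquant⟩

end Quantization

section Segment

variable {E : Type*} [NormedAddCommGroup E] [NormedSpace ℝ E] [MeasurableSpace E] [BorelSpace E]

lemma hausdorffMeasure_restrict_segment (x y : E) :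
    (μH[1] : Measure E).restrict (segment ℝ x y) =
      nndist x y • (volume.restrict (Icc (0 : ℝ) 1)).map (lineMap x y) := by
  have hmeas : Measurable (lineMap x y : ℝ → E) := lineMap_continuous.measurable
  ext s hs
  rw [Measure.restrict_apply hs, segment_eq_image_lineMap, inter_comm, ← image_inter_preimage,
    hausdorffMeasure_lineMap_image, hausdorffMeasure_real, Measure.smul_apply,
    Measure.map_apply hmeas hs, Measure.restrict_apply (hmeas hs), inter_comm]

lemma segment_ae_eq_openSegment (x y : E) :
    segment ℝ x y =ᵐ[(μH[1] : Measure E)] openSegment ℝ x y := by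
  have := Measure.nullSingletonClass_hausdorff E one_pos
  rw [← insert_endpoints_openSegment]
  exact (insert_ae_eq_self _ _).trans (insert_ae_eq_self _ _)

end Segment

section Hexagon

/-- The six vertices `O, A₁, …, A₅` of the hexagon, indexed cyclically. -/
def hexVertex : Fin 6 → E2 :=
  ![pt 0 0, pt 1 0, pt (3/2) (√3/2), pt 1 (√3), pt 0 (√3), pt (-(1/2)) (√3/2)]

/-- The `k`th edge of the hexagon, parametrized by `[0, 1]`. -/
def hexEdge (k : Fin 6) : ℝ → E2 := lineMap (hexVertex k) (hexVertex (k + 1))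

lemma sqrt_three_sq : √3 ^ 2 = 3 := Real.sq_sqrt (by norm_num)

lemma norm_sub_sq_eq_coord (x y : E2) : ‖x - y‖ ^ 2 = (x 0 - y 0) ^ 2 + (x 1 - y 1) ^ 2 := by
  simp [EuclideanSpace.real_norm_sq_eq]

lemma hexL_eq_iUnion : hexL = ⋃ k, segment ℝ (hexVertex k) (hexVertex (k + 1)) := by
  ext x
  simp [hexL, hexVertex, Fin.exists_fin_succ, or_assoc]

lemma norm_hexVertex_sub_succ (k : Fin 6) : ‖hexVertex k - hexVertex (k + 1)‖ = 1 := by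
  rw [← sq_eq_sq₀ (norm_nonneg _) zero_le_one, norm_sub_sq_eq_coord]
  fin_cases k <;> simp [hexVertex, pt] <;> linarith [sqrt_three_sq]

lemma hexVertex_fst (k : Fin 6) : hexVertex k 0 = ![0, 1, 3/2, 1, 0, -(1/2)] k := by
  fin_cases k <;> rfl

lemma hexVertex_snd_div_sqrt_three (k : Fin 6) :
    hexVertex k 1 / √3 = ![0, 0, 1/2, 1, 1, 1/2] k := by
  fin_cases k <;> simp [hexVertex, pt, div_div_cancel_left']

lemma pairwise_disjoint_openSegment_hexVertex :
    Pairwise (Function.onFun Disjoint fun k ↦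
      openSegment ℝ (hexVertex k) (hexVertex (k + 1))) := by
  intro j k hjk
  rw [Function.onFun, Set.disjoint_left]
  simp only [openSegment_eq_image_lineMap]
  rintro _ ⟨s, ⟨hs₀, hs₁⟩, rfl⟩ ⟨t, ⟨ht₀, ht₁⟩, heq⟩
  have hx := congrArg (fun v : E2 ↦ v 0) heq
  have hy := congrArg (fun v : E2 ↦ v 1 / √3) heq
  simp only [lineMap_apply_module, PiLp.add_apply, PiLp.smul_apply, smul_eq_mul, add_div,
    mul_div_assoc, hexVertex_fst, hexVertex_snd_div_sqrt_three] at hx hy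
  fin_cases j <;> fin_cases k <;> first | exact hjk rfl | (simp at hx hy <;> linarith)

lemma hexP_eq_smul_sum_map :
    hexP = (6 : ℝ≥0∞)⁻¹ • ∑ k, (volume.restrict (Icc (0 : ℝ) 1)).map (hexEdge k) := by
  have hdisj : Pairwise (Function.onFun (AEDisjoint (μH[1] : Measure E2)) fun k ↦
      segment ℝ (hexVertex k) (hexVertex (k + 1))) := fun j k hjk ↦
    (pairwise_disjoint_openSegment_hexVertex hjk).aedisjoint.congr
      (segment_ae_eq_openSegment _ _) (segment_ae_eq_openSegment _ _)
  have hmeas (k : Fin 6) : NullMeasurableSet (segment ℝ (hexVertex k) (hexVertex (k + 1)))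
      (μH[1] : Measure E2) := by
    rw [segment_eq_image_lineMap]
    exact (isCompact_Icc.image lineMap_continuous).measurableSet.nullMeasurableSet
  have hlength (k : Fin 6) : nndist (hexVertex k) (hexVertex (k + 1)) = 1 := by
    rw [← NNReal.coe_inj, coe_nndist, dist_eq_norm, norm_hexVertex_sub_succ, NNReal.coe_one]
  rw [hexP, hexL_eq_iUnion, Measure.restrict_iUnion_ae hdisj hmeas, Measure.sum_fintype]
  simp only [hausdorffMeasure_restrict_segment, hlength, one_smul, hexEdge]

lemma continuous_hexEdge (k : Fin 6) : Continuous (hexEdge k) := lineMap_continuous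

instance : IsProbabilityMeasure hexP := by
  have (k : Fin 6) : (volume.restrict (Icc (0 : ℝ) 1)).map (hexEdge k) univ = 1 := by
    rw [Measure.map_apply (continuous_hexEdge k).measurable .univ]
    simp
  constructor
  simp [hexP_eq_smul_sum_map, this, ENNReal.inv_mul_cancel]

variable {f : E2 → ℝ}

lemma integrable_map_hexEdge (hf : Continuous f) (k : Fin 6) :
    Integrable f ((volume.restrict (Icc (0 : ℝ) 1)).map (hexEdge k)) := by
  rw [integrable_map_measure hf.aestronglyMeasurable (continuous_hexEdge k).aemeasurable]
  exact (hf.comp (continuous_hexEdge k)).integrableOn_Icc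

lemma integrable_hexP (hf : Continuous f) : Integrable f hexP := by
  rw [hexP_eq_smul_sum_map]
  exact (integrable_finsetSum_measure.2 fun k _ ↦ integrable_map_hexEdge hf k).smul_measure
    (by simp)

lemma memLp_id_hexP : MemLp id 2 hexP :=
  (memLp_two_iff_integrable_sq_norm continuous_id.aestronglyMeasurable).2
    (integrable_hexP (by fun_prop))

lemma integral_hexP (hf : Continuous f) :
    ∫ x, f x ∂hexP = 6⁻¹ * ∑ k, ∫ t in (0 : ℝ)..1, f (hexEdge k t) := by
  have hedge (k : Fin 6) : ∫ x, f x ∂(volume.restrict (Icc (0 : ℝ) 1)).map (hexEdge k) =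
      ∫ t in (0 : ℝ)..1, f (hexEdge k t) := by
    rw [integral_map (continuous_hexEdge k).aemeasurable hf.aestronglyMeasurable,
      intervalIntegral.integral_of_le zero_le_one, integral_Icc_eq_integral_Ioc]
  rw [hexP_eq_smul_sum_map, integral_smul_measure,
    integral_finsetSum_measure fun k _ ↦ integrable_map_hexEdge hf k]
  simp [hedge]

end Hexagon

section PosPartMean

/-- The mean of the positive part of the affine function on `[0, 1]` with end values `a`, `b`. -/
def posPartMean (a b : ℝ) : ℝ := ∫ t in (0 : ℝ)..1, max (lineMap a b t) 0

variable {a b : ℝ}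

lemma posPartMean_comm (a b : ℝ) : posPartMean a b = posPartMean b a := by
  have hflip := intervalIntegral.integral_comp_sub_left (a := 0) (b := 1)
    (fun t : ℝ ↦ max (lineMap b a t) 0) 1
  rw [sub_self, sub_zero] at hflip
  simp only [lineMap_apply_one_sub] at hflip
  exact hflip

lemma posPartMean_of_nonneg (ha : 0 ≤ a) (hb : 0 ≤ b) : posPartMean a b = (a + b) / 2 := by
  have hpos : EqOn (fun t : ℝ ↦ max (lineMap a b t) 0) (lineMap a b) (uIcc 0 1) := by
    intro t ht
    rw [uIcc_of_le zero_le_one] at ht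
    exact max_eq_left (lineMap_mono_endpoints ha hb ht.1 ht.2 |>.trans' (by simp))
  rw [posPartMean, intervalIntegral.integral_congr hpos, integral_lineMap]
  ring

lemma posPartMean_of_nonpos (ha : a ≤ 0) (hb : b ≤ 0) : posPartMean a b = 0 := by
  have hneg : EqOn (fun t : ℝ ↦ max (lineMap a b t) 0) 0 (uIcc 0 1) := by
    intro t ht
    rw [uIcc_of_le zero_le_one] at ht
    exact max_eq_right (lineMap_mono_endpoints ha hb ht.1 ht.2 |>.trans (by simp))
  simp [posPartMean, intervalIntegral.integral_congr hneg]

lemma exists_posPartMean_eq (ha : 0 ≤ a) (hb : b ≤ 0) :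
    ∃ s ∈ Icc (0 : ℝ) 1, posPartMean a b = s * a + s ^ 2 * (b - a) / 2 := by
  obtain ⟨s, hs, hzero⟩ : ∃ s ∈ Icc (0 : ℝ) 1, lineMap a b s = 0 :=
    intermediate_value_Icc' zero_le_one (f := lineMap a b) (by fun_prop) (by simp [ha, hb])
  rw [lineMap_apply_ring'] at hzero
  have hpos : EqOn (fun t : ℝ ↦ max (lineMap a b t) 0) (lineMap a b) (uIcc 0 s) := by
    intro t ht
    rw [uIcc_of_le hs.1] at ht
    refine max_eq_left ?_
    rw [lineMap_apply_ring']
    nlinarith [ht.2]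
  have hneg : EqOn (fun t : ℝ ↦ max (lineMap a b t) 0) 0 (uIcc s 1) := by
    intro t ht
    rw [uIcc_of_le hs.2] at ht
    refine max_eq_right ?_
    rw [lineMap_apply_ring']
    nlinarith [ht.1]
  refine ⟨s, hs, ?_⟩
  have hcont : Continuous fun t : ℝ ↦ max (lineMap a b t) 0 := by fun_prop
  rw [posPartMean, ← intervalIntegral.integral_add_adjacent_intervals
    (hcont.intervalIntegrable 0 s) (hcont.intervalIntegrable s 1),
    intervalIntegral.integral_congr hpos, intervalIntegral.integral_congr hneg, integral_lineMap]
  simp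

end PosPartMean

section HexGain

/-- The values at the six vertices of a regular hexagon centred at the origin of the linear
functional whose values at the first two vertices are `p` and `q`. -/
def hexValues (p q : ℝ) : Fin 6 → ℝ := ![p, q, q - p, -p, -q, p - q]

/-- The level that the functional `2 * ⟪·, w⟫`, with values `hexValues p q` on the vertices of the
hexagon of side one, must exceed for the point at position `w` from the centre to bring a net gain:
`(p ^ 2 - p * q + q ^ 2) / 3` is `‖w‖ ^ 2` and `21 / 256` is the price per point. -/
def hexThreshold (p q : ℝ) : ℝ := (p ^ 2 - p * q + q ^ 2) / 3 + 21 / 256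

/-- The arc-length integral over the hexagon of the positive part of the net gain of the point `w`
encoded by `p` and `q` as in `hexThreshold`. -/
def hexGain (p q : ℝ) : ℝ :=
  ∑ k, posPartMean (hexValues p q k - hexThreshold p q) (hexValues p q (k + 1) - hexThreshold p q)

variable {p q : ℝ}

lemma hexThreshold_pos (p q : ℝ) : 0 < hexThreshold p q := by
  unfold hexThreshold
  nlinarith [sq_nonneg (p - q), sq_nonneg (p + q)]

lemma hexThreshold_hexValues (p q : ℝ) (k : Fin 6) :
    hexThreshold (hexValues p q k) (hexValues p q (k + 1)) = hexThreshold p q := by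
  fin_cases k <;> simp [hexValues, hexThreshold] <;> ring

lemma hexValues_hexValues (p q : ℝ) (k j : Fin 6) :
    hexValues (hexValues p q k) (hexValues p q (k + 1)) j = hexValues p q (k + j) := by
  fin_cases k <;> fin_cases j <;> simp [hexValues] <;> ring

lemma hexGain_hexValues (p q : ℝ) (k : Fin 6) :
    hexGain (hexValues p q k) (hexValues p q (k + 1)) = hexGain p q := by
  simp only [hexGain, hexThreshold_hexValues, hexValues_hexValues, ← add_assoc]
  exact Equiv.sum_comp (Equiv.addLeft k) fun j ↦ posPartMean (hexValues p q j - hexThreshold p q)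
    (hexValues p q (j + 1) - hexThreshold p q)

lemma hexGain_sub_right (p q : ℝ) : hexGain p (p - q) = hexGain p q := by
  have hthreshold : hexThreshold p (p - q) = hexThreshold p q := by
    unfold hexThreshold
    ring
  have hvalues (k : Fin 6) : hexValues p (p - q) k = hexValues p q (-k) := by
    fin_cases k <;> simp [hexValues]
  simp only [hexGain, hthreshold, hvalues]
  rw [← Equiv.sum_comp (Equiv.subLeft (-1))]
  refine Finset.sum_congr rfl fun k _ ↦ ?_
  rw [posPartMean_comm]
  simp

lemma mul_add_mul_sub_hexThreshold_le {a b ℓ : ℝ} (hℓ : 0 ≤ ℓ)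
    (hab : a ^ 2 + a * b + b ^ 2 ≤ ℓ * (63 / 64 + 21 / 256 * ℓ)) :
    a * p + b * q - ℓ * hexThreshold p q ≤ 63 / 64 := by
  rcases hℓ.eq_or_lt with rfl | hℓ
  · obtain rfl : b = 0 := by nlinarith [sq_nonneg (a + b), sq_nonneg a]
    obtain rfl : a = 0 := by nlinarith
    norm_num
  · -- Complete the square in `(p, q)` for the quadratic form in `ℓ * hexThreshold p q`.
    have hsquare : 0 ≤ (ℓ * p - 2 * a - b) ^ 2 - (ℓ * p - 2 * a - b) * (ℓ * q - a - 2 * b) +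
        (ℓ * q - a - 2 * b) ^ 2 := by
      nlinarith [sq_nonneg (ℓ * p - 2 * a - b - (ℓ * q - a - 2 * b)),
        sq_nonneg (ℓ * p - 2 * a - b), sq_nonneg (ℓ * q - a - 2 * b)]
    refine le_of_mul_le_mul_left ?_ hℓ
    unfold hexThreshold
    linarith

section Sector

variable {s t : ℝ}

lemma gain_around_vertex_le (hs : s ∈ Icc (0 : ℝ) 1) (ht : t ∈ Icc (0 : ℝ) 1) :
    s * (p - hexThreshold p q) + s ^ 2 * (q - p) / 2 +
      (t * (p - hexThreshold p q) + t ^ 2 * (-q) / 2) ≤ 63 / 64 := by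
  obtain ⟨hs₀, hs₁⟩ := hs
  obtain ⟨ht₀, ht₁⟩ := ht
  have hmoment :
      (s + t - s ^ 2 / 2) ^ 2 + (s + t - s ^ 2 / 2) * ((s ^ 2 - t ^ 2) / 2) +
        ((s ^ 2 - t ^ 2) / 2) ^ 2 ≤
        (s + t) * (63 / 64 + 21 / 256 * (s + t)) := by
    nlinarith [sq_nonneg (s - t), mul_nonneg hs₀ (sub_nonneg.2 hs₁),
      mul_nonneg ht₀ (sub_nonneg.2 ht₁)]
  linarith [mul_add_mul_sub_hexThreshold_le (p := p) (q := q) (by positivity) hmoment]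

lemma gain_around_edge_le (hs : s ∈ Icc (0 : ℝ) 1) (ht : t ∈ Icc (0 : ℝ) 1) :
    (p - hexThreshold p q + (q - hexThreshold p q)) / 2 +
      (s * (q - hexThreshold p q) + s ^ 2 * (-p) / 2) +
      (t * (p - hexThreshold p q) + t ^ 2 * (-q) / 2) ≤ 63 / 64 := by
  obtain ⟨hs₀, hs₁⟩ := hs
  obtain ⟨ht₀, ht₁⟩ := ht
  have hmoment :
      (1 / 2 + t - s ^ 2 / 2) ^ 2 + (1 / 2 + t - s ^ 2 / 2) * (1 / 2 + s - t ^ 2 / 2) +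
        (1 / 2 + s - t ^ 2 / 2) ^ 2 ≤
        (1 + s + t) * (63 / 64 + 21 / 256 * (1 + s + t)) := by
    nlinarith [mul_nonneg (sub_nonneg.2 hs₁) (sub_nonneg.2 ht₁), sq_nonneg (s - t),
      sq_nonneg (s + t - 1), mul_nonneg hs₀ (sub_nonneg.2 hs₁), mul_nonneg ht₀ (sub_nonneg.2 ht₁)]
  linarith [mul_add_mul_sub_hexThreshold_le (p := p) (q := q) (by positivity) hmoment]

lemma gain_around_two_edges_le (hs : s ∈ Icc (0 : ℝ) 1) (ht : t ∈ Icc (0 : ℝ) 1) :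
    (p - hexThreshold p q + (q - hexThreshold p q)) / 2 +
      (p - q - hexThreshold p q + (p - hexThreshold p q)) / 2 +
      (s * (q - hexThreshold p q) + s ^ 2 * (-p) / 2) +
      (t * (p - q - hexThreshold p q) + t ^ 2 * (-p) / 2) ≤ 63 / 64 := by
  obtain ⟨hs₀, hs₁⟩ := hs
  obtain ⟨ht₀, ht₁⟩ := ht
  have hmoment :
      (3 / 2 + t - (s ^ 2 + t ^ 2) / 2) ^ 2 + (3 / 2 + t - (s ^ 2 + t ^ 2) / 2) * (s - t) +
        (s - t) ^ 2 ≤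
        (2 + s + t) * (63 / 64 + 21 / 256 * (2 + s + t)) := by
    nlinarith [sq_nonneg (s + t - 1), mul_nonneg hs₀ (sub_nonneg.2 hs₁),
      mul_nonneg ht₀ (sub_nonneg.2 ht₁)]
  linarith [mul_add_mul_sub_hexThreshold_le (p := p) (q := q) (by positivity) hmoment]

lemma hexGain_eq_of_sector (hqp : q ≤ p) (hpq : p ≤ 2 * q) :
    hexGain p q = posPartMean (p - hexThreshold p q) (q - hexThreshold p q) +
      posPartMean (q - hexThreshold p q) (q - p - hexThreshold p q) +
      posPartMean (p - q - hexThreshold p q) (-q - hexThreshold p q) +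
      posPartMean (p - hexThreshold p q) (p - q - hexThreshold p q) := by
  have hthr := hexThreshold_pos p q
  have hexpand : hexGain p q = posPartMean (p - hexThreshold p q) (q - hexThreshold p q) +
      posPartMean (q - hexThreshold p q) (q - p - hexThreshold p q) +
      posPartMean (q - p - hexThreshold p q) (-p - hexThreshold p q) +
      posPartMean (-p - hexThreshold p q) (-q - hexThreshold p q) +
      posPartMean (-q - hexThreshold p q) (p - q - hexThreshold p q) +
      posPartMean (p - q - hexThreshold p q) (p - hexThreshold p q) := by
    rw [hexGain, Fin.sum_univ_six]
    rfl
  rw [hexpand, posPartMean_of_nonpos (a := q - p - hexThreshold p q) (by linarith) (by linarith),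
    posPartMean_of_nonpos (a := -p - hexThreshold p q) (by linarith) (by linarith),
    posPartMean_comm (-q - hexThreshold p q), posPartMean_comm _ (p - hexThreshold p q)]
  ring

lemma hexGain_le_of_sector (hqp : q ≤ p) (hpq : p ≤ 2 * q) : hexGain p q ≤ 63 / 64 := by
  have hthr := hexThreshold_pos p q
  rw [hexGain_eq_of_sector hqp hpq]
  rcases le_total p (hexThreshold p q) with hp | hp
  · rw [posPartMean_of_nonpos, posPartMean_of_nonpos, posPartMean_of_nonpos,
      posPartMean_of_nonpos] <;> linarith
  rcases le_total q (hexThreshold p q) with hq | hq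
  · obtain ⟨s, hs, hgain_s⟩ := exists_posPartMean_eq (sub_nonneg.2 hp) (sub_nonpos.2 hq)
    obtain ⟨t, ht, hgain_t⟩ := exists_posPartMean_eq (sub_nonneg.2 hp)
      (b := p - q - hexThreshold p q) (by linarith)
    rw [hgain_s, hgain_t, posPartMean_of_nonpos (sub_nonpos.2 hq) (by linarith),
      posPartMean_of_nonpos (a := p - q - hexThreshold p q) (by linarith) (by linarith)]
    linarith [gain_around_vertex_le (p := p) (q := q) hs ht]
  obtain ⟨s, hs, hgain_s⟩ := exists_posPartMean_eq (sub_nonneg.2 hq)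
    (b := q - p - hexThreshold p q) (by linarith)
  rw [hgain_s, posPartMean_of_nonneg (sub_nonneg.2 hp) (sub_nonneg.2 hq)]
  rcases le_total (p - q) (hexThreshold p q) with hr | hr
  · obtain ⟨t, ht, hgain_t⟩ := exists_posPartMean_eq (sub_nonneg.2 hp) (sub_nonpos.2 hr)
    rw [hgain_t, posPartMean_of_nonpos (sub_nonpos.2 hr) (by linarith)]
    linarith [gain_around_edge_le (p := p) (q := q) hs ht]
  · obtain ⟨t, ht, hgain_t⟩ := exists_posPartMean_eq (sub_nonneg.2 hr)
      (b := -q - hexThreshold p q) (by linarith)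
    rw [hgain_t, posPartMean_of_nonneg (sub_nonneg.2 hp) (sub_nonneg.2 hr)]
    linarith [gain_around_two_edges_le (p := p) (q := q) hs ht]

theorem hexGain_le (p q : ℝ) : hexGain p q ≤ 63 / 64 := by
  suffices hmax : ∀ p q : ℝ, 0 ≤ q → q ≤ p → hexGain p q ≤ 63 / 64 by
    obtain ⟨k, hk⟩ := Finite.exists_max (hexValues p q)
    have hprev : hexValues p q k - hexValues p q (k + 1) ≤ hexValues p q k :=
      (hexValues_hexValues p q k 5).trans_le (hk (k + 5))
    rw [← hexGain_hexValues p q k]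
    exact hmax _ _ (by linarith) (hk _)
  intro p q hq hqp
  rcases le_total p (2 * q) with hpq | hpq
  · exact hexGain_le_of_sector hqp hpq
  · rw [← hexGain_sub_right]
    exact hexGain_le_of_sector (by linarith) (by linarith)

end Sector

end HexGain

section LowerBound

/-- The centre of the hexagon. -/
def hexCenter : E2 := pt (1 / 2) (√3 / 2)

lemma exists_netGain_hexVertex_eq (v : E2) : ∃ p q, ∀ k,
    netGain hexCenter (21 / 256) v (hexVertex k) = hexValues p q k - hexThreshold p q := by
  set x := v 0 - 1 / 2 with hx
  set y := v 1 - √3 / 2 with hy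
  have hthreshold : hexThreshold (-x - √3 * y) (x - √3 * y) = x ^ 2 + y ^ 2 + 21 / 256 := by
    unfold hexThreshold
    linear_combination y ^ 2 / 3 * sqrt_three_sq
  refine ⟨-x - √3 * y, x - √3 * y, fun k ↦ ?_⟩
  rw [netGain, norm_sub_sq_eq_coord, norm_sub_sq_eq_coord, hthreshold, hx, hy]
  fin_cases k <;> simp [hexVertex, hexCenter, hexValues, pt] <;> linarith [sqrt_three_sq]

lemma integral_max_netGain_hexP_le (v : E2) :
    ∫ x, max (netGain hexCenter (21 / 256) v x) 0 ∂hexP ≤ 21 / 128 := by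
  obtain ⟨p, q, hpq⟩ := exists_netGain_hexVertex_eq v
  have hgain : ∑ k, ∫ t in (0 : ℝ)..1, max (netGain hexCenter (21 / 256) v (hexEdge k t)) 0 =
      hexGain p q := by
    simp only [hexEdge, netGain_lineMap, hpq, hexGain, posPartMean]
  rw [integral_hexP ((continuous_netGain _ _ _).max continuous_const), hgain]
  linarith [hexGain_le p q]

lemma norm_hexVertex_sub_hexCenter (k : Fin 6) : ‖hexVertex k - hexCenter‖ = 1 := by
  rw [← sq_eq_sq₀ (norm_nonneg _) zero_le_one, norm_sub_sq_eq_coord]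
  fin_cases k <;> norm_num [hexVertex, hexCenter, pt] <;> linarith [sqrt_three_sq]

lemma integral_norm_sub_hexCenter_sq : ∫ x, ‖x - hexCenter‖ ^ 2 ∂hexP = 5 / 6 := by
  rw [integral_hexP (by fun_prop)]
  simp only [hexEdge, integral_norm_lineMap_sub_sq, norm_hexVertex_sub_hexCenter,
    norm_hexVertex_sub_succ]
  norm_num

theorem le_integral_infDist_sq_hexP {n : ℕ} {α : Finset E2} (hα : α.Nonempty) (hn : α.card ≤ n) :
    5 / 6 - 21 / 256 - n * (21 / 128) ≤ ∫ x, infDist x α ^ 2 ∂hexP := by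
  rw [← integral_norm_sub_hexCenter_sq]
  exact integral_norm_sub_sq_sub_le_integral_infDist_sq memLp_id_hexP hexCenter (21 / 256)
    integral_max_netGain_hexP_le hα hn

end LowerBound

section UpperBound

/-- The candidate three-means. -/
def hexMeans : Set E2 :=
  {pt (37/32) (9 * √3 / 32), pt (1/2) (15 * √3 / 16), pt (-(5/32)) (9 * √3 / 32)}

/-- A mean nearest to each vertex. -/
def nearestMean : Fin 6 → E2 :=
  ![pt (-(5/32)) (9 * √3 / 32), pt (37/32) (9 * √3 / 32), pt (37/32) (9 * √3 / 32),
    pt (1/2) (15 * √3 / 16), pt (1/2) (15 * √3 / 16), pt (-(5/32)) (9 * √3 / 32)]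

lemma nearestMean_mem (k : Fin 6) : nearestMean k ∈ hexMeans := by
  fin_cases k <;> simp [nearestMean, hexMeans]

lemma integral_infDist_hexMeans_sq_le : ∫ x, infDist x hexMeans ^ 2 ∂hexP ≤ 199 / 768 := by
  rw [integral_hexP (f := fun x ↦ infDist x hexMeans ^ 2) ((continuous_infDist_pt _).pow 2)]
  calc 6⁻¹ * ∑ k, ∫ t in (0 : ℝ)..1, infDist (hexEdge k t) hexMeans ^ 2
      ≤ 6⁻¹ * ∑ k, ((3 * ‖hexVertex k - nearestMean k‖ ^ 2 +
          ‖hexVertex (k + 1) - nearestMean k‖ ^ 2 + ‖hexVertex k - nearestMean (k + 1)‖ ^ 2 +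
          3 * ‖hexVertex (k + 1) - nearestMean (k + 1)‖ ^ 2) / 8 -
          ‖hexVertex k - hexVertex (k + 1)‖ ^ 2 / 6) := by
        gcongr with k
        exact integral_infDist_lineMap_sq_le _ _ (nearestMean_mem k) (nearestMean_mem (k + 1))
    _ = 199 / 768 := by
        simp only [norm_sub_sq_eq_coord, Fin.sum_univ_six, Fin.reduceAdd, hexVertex, nearestMean,
          pt, Matrix.cons_val]
        linarith [sqrt_three_sq]

end UpperBound

/-- The set `{(37/32, 9√3/32), (1/2, 15√3/16), (-5/32, 9√3/32)}` forms an
optimal set of three-means for the uniform distribution on the hexagon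
boundary, and `V₃ = 199/768`. -/
theorem stmt_3 :
    IsOptimalSet hexP 3
      {pt (37/32) (9 * Real.sqrt 3 / 32), pt (1/2) (15 * Real.sqrt 3 / 16),
        pt (-(5/32)) (9 * Real.sqrt 3 / 32)} ∧
    quantErr hexP 3 = 199 / 768 := by
  refine isOptimalSet_and_quantErr_eq (by simp) (by simp) ?_ integral_infDist_hexMeans_sq_le ?_
  · exact (ncard_insert_le _ _).trans (Nat.succ_le_succ ((ncard_insert_le _ _).trans (by simp)))
  · intro β hβ hcard
    linarith [le_integral_infDist_sq_hexP hβ hcard]
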